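/- Suppose ‖φ‖_{L∞(∂Ω)} ≤ 1. Then there exists a constant C > 0, depending only on Ω, μ, δ₀, κ⁺ and κ⁻ (in particular independent of δ and ε), such that sup_{x ∈ Ω^μ} |∇u_ε(x)| ≤ C ( sup_{x ∈ S} |∇u_ε(x)| + 1 ). -/

import Mathlib

open Set MeasureTheory

/-- Partial derivative in direction `i` of a function on `ℝ²`. -/
noncomputable def pd (i : Fin 2) (f : EuclideanSpace ℝ (Fin 2) → ℝ)
    (x : EuclideanSpace ℝ (Fin 2)) : ℝ :=
  fderiv ℝ f x (EuclideanSpace.single i 1)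

/-- The center `(0, -2-2δ)` of the lower disk `B⁻`. -/
noncomputable def ctr (δ : ℝ) : EuclideanSpace ℝ (Fin 2) :=
  (WithLp.equiv 2 (Fin 2 → ℝ)).symm ![0, -2 - 2 * δ]

/-- The upper unit disk `B⁺`, centered at the origin. -/
noncomputable def Bp : Set (EuclideanSpace ℝ (Fin 2)) := Metric.ball 0 1

/-- The lower unit disk `B⁻`, centered at `(0, -2-2δ)`. -/
noncomputable def Bm (δ : ℝ) : Set (EuclideanSpace ℝ (Fin 2)) := Metric.ball (ctr δ) 1

open Classical in
/-- The conductivity: `κ⁺` on `B⁺`, `κ⁻` on `B⁻`, and `1` elsewhere. -/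
noncomputable def aFun (δ κp κm : ℝ) (x : EuclideanSpace ℝ (Fin 2)) : ℝ :=
  if x ∈ Bp then κp else if x ∈ Bm δ then κm else 1

/-- `Ω^σ = {x ∈ Ω : dist(x, ∂Ω) ≥ σ}`. -/
noncomputable def innerReg (Ω : Set (EuclideanSpace ℝ (Fin 2))) (σ : ℝ) :
    Set (EuclideanSpace ℝ (Fin 2)) :=
  {x ∈ Ω | σ ≤ Metric.infDist x (frontier Ω)}

/-- `Ω` has smooth boundary: it is the sublevel set of a smooth function with
nonvanishing gradient on the boundary. -/
def SmoothBoundary (Ω : Set (EuclideanSpace ℝ (Fin 2))) : Prop :=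
  ∃ f : EuclideanSpace ℝ (Fin 2) → ℝ, ContDiff ℝ (⊤ : ℕ∞) f ∧ Ω = {x | f x < 0} ∧
    ∀ x ∈ frontier Ω, fderiv ℝ f x ≠ 0

/-- `‖φ‖_{L^∞(∂Ω)}`. -/
noncomputable def bdryNorm (Ω : Set (EuclideanSpace ℝ (Fin 2))) (φ : EuclideanSpace ℝ (Fin 2) → ℝ) : ℝ :=
  sSup ((fun y => |φ y|) '' frontier Ω)

/-- `W⁺ = {x ∈ Ω : dist(x, ∂B⁺) ≤ μ, x₂ ≥ -1-δ}`. -/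
noncomputable def Wp (Ω : Set (EuclideanSpace ℝ (Fin 2))) (δ μ : ℝ) :
    Set (EuclideanSpace ℝ (Fin 2)) :=
  {x ∈ Ω | Metric.infDist x (Metric.sphere (0 : EuclideanSpace ℝ (Fin 2)) 1) ≤ μ
    ∧ -1 - δ ≤ x 1}

/-- `W⁻ = {x ∈ Ω : dist(x, ∂B⁻) ≤ μ, x₂ ≤ -1-δ}`. -/
noncomputable def Wm (Ω : Set (EuclideanSpace ℝ (Fin 2))) (δ μ : ℝ) :
    Set (EuclideanSpace ℝ (Fin 2)) :=
  {x ∈ Ω | Metric.infDist x (Metric.sphere (ctr δ) 1) ≤ μ ∧ x 1 ≤ -1 - δ}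

/-- The horizontal segment `S = {(x₁, -1-δ) : -c ≤ x₁ ≤ c}`. -/
def Sseg (c δ : ℝ) : Set (EuclideanSpace ℝ (Fin 2)) :=
  {x | |x 0| ≤ c ∧ x 1 = -1 - δ}

/-- The thin rectangle `E = {(x₁,x₂) : -c ≤ x₁ ≤ c, |x₂+1+δ| ≤ δ/2}`. -/
def Eset (c δ : ℝ) : Set (EuclideanSpace ℝ (Fin 2)) :=
  {x | |x 0| ≤ c ∧ |x 1 + 1 + δ| ≤ δ / 2}

/-!
On the part of `Ω` nearer to one disk than to the other, `a` depends on the distance `r` to the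
center of that disk alone, so that `div (a ∇u) = 0` makes `T = ∂u/∂θ` and the flux `w = a r ∂u/∂r`
conjugate to each other. Hence `div (a ∇T) = 0` and `div (a⁻¹ ∇w) = 0`, and where in addition
`|r - 1| ≤ μ` the maximum principle bounds both, and with them `|∇u|`, by boundary values. The
boundary lies in the union of `S` and the circles `r = 1 ± μ`. Around the points of these circles
that occur, as around all points of `Ω^μ` outside the annuli, `a` is constant; since `|u| ≤ 1`, the
gradient estimate for harmonic functions applies there.
-/

section SecondOrder

open InnerProductSpace Laplacian Topology

variable {E : Type*} [NormedAddCommGroup E] [InnerProductSpace ℝ E]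

theorem deriv_deriv_nonpos_of_isLocalMax {f : ℝ → ℝ} {t : ℝ} (h : IsLocalMax f t)
    (hf : ContinuousAt f t) : deriv (deriv f) t ≤ 0 := by
  by_contra! hpos
  have hmin : IsLocalMin f t := isLocalMin_of_deriv_deriv_pos hpos h.deriv_eq_zero hf
  have hconst : f =ᶠ[𝓝 t] fun _ ↦ f t := by
    filter_upwards [h, hmin] with s h₁ h₂ using le_antisymm h₁ h₂
  have hderiv : deriv f =ᶠ[𝓝 t] fun _ ↦ 0 := by simpa using hconst.deriv
  simp [hderiv.deriv_eq] at hpos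

theorem hasFDerivAt_fderiv_apply {f : E → ℝ} {x : E} (hf : ContDiffAt ℝ 2 f x) (v : E) :
    HasFDerivAt (fun y ↦ fderiv ℝ f y v) ((fderiv ℝ (fderiv ℝ f) x).flip v) x := by
  have hf' := (hf.fderiv_right (m := 1) le_rfl).differentiableAt one_ne_zero
  simpa using hf'.hasFDerivAt.clm_apply (hasFDerivAt_const v x)

theorem fderiv_fderiv_self_nonpos_of_isLocalMax {f : E → ℝ} {x : E} (h : IsLocalMax f x)
    (hf : ContDiffAt ℝ 2 f x) (v : E) : fderiv ℝ (fderiv ℝ f) x v v ≤ 0 := by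
  set γ : ℝ → E := fun t ↦ x + t • v with hγ
  have hγ' (t : ℝ) : HasDerivAt γ v t := by
    simpa [hγ] using ((hasDerivAt_id t).smul_const v).const_add x
  have hγ₀ : γ 0 = x := by simp [hγ]
  have hlim : Filter.Tendsto γ (𝓝 0) (𝓝 x) := hγ₀ ▸ (hγ' 0).continuousAt.tendsto
  have hmax : IsLocalMax (f ∘ γ) 0 := by
    simpa only [IsLocalMax, IsMaxFilter, Function.comp_apply, hγ₀] using hlim.eventually h
  have hderiv : deriv (f ∘ γ) =ᶠ[𝓝 0] fun t ↦ fderiv ℝ f (γ t) v := by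
    filter_upwards [hlim.eventually (hf.eventually (by simp))] with t ht
    exact ((ht.differentiableAt two_ne_zero).hasFDerivAt.comp_hasDerivAt t (hγ' t)).deriv
  have hderiv₂ : HasDerivAt (fun t ↦ fderiv ℝ f (γ t) v) (fderiv ℝ (fderiv ℝ f) x v v) 0 :=
    (hasFDerivAt_fderiv_apply hf v).comp_hasDerivAt_of_eq 0 (hγ' 0) hγ₀.symm
  rw [← hderiv₂.deriv, ← hderiv.deriv_eq]
  exact deriv_deriv_nonpos_of_isLocalMax hmax
    (hf.continuousAt.comp_of_eq (hγ' 0).continuousAt hγ₀)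

theorem fderiv_exp_mul_inner (l : ℝ) (e : E) :
    fderiv ℝ (fun y ↦ Real.exp (l * ⟪e, y⟫_ℝ)) =
      fun y ↦ (Real.exp (l * ⟪e, y⟫_ℝ) * l) • innerSL ℝ e := by
  funext y
  have h := (((innerSL ℝ e).hasFDerivAt (x := y)).const_mul l).exp
  simpa [smul_smul] using h.fderiv

variable [FiniteDimensional ℝ E]

theorem laplacian_eq_sum_fderiv_fderiv {ι : Type*} [Fintype ι] (b : OrthonormalBasis ι ℝ E)
    (f : E → ℝ) (x : E) : Δ f x = ∑ i, fderiv ℝ (fderiv ℝ f) x (b i) (b i) := by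
  simp [laplacian_eq_iteratedFDeriv_orthonormalBasis f b, iteratedFDeriv_two_apply]

theorem laplacian_nonpos_of_isLocalMax {f : E → ℝ} {x : E} (h : IsLocalMax f x)
    (hf : ContDiffAt ℝ 2 f x) : Δ f x ≤ 0 := by
  rw [laplacian_eq_sum_fderiv_fderiv (stdOrthonormalBasis ℝ E)]
  exact Finset.sum_nonpos fun i _ ↦ fderiv_fderiv_self_nonpos_of_isLocalMax h hf _

theorem laplacian_exp_mul_inner (l : ℝ) (e x : E) :
    Δ (fun y ↦ Real.exp (l * ⟪e, y⟫_ℝ)) x = Real.exp (l * ⟪e, x⟫_ℝ) * (l * ‖e‖) ^ 2 := by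
  have h := ((((innerSL ℝ e).hasFDerivAt (x := x)).const_mul l).exp.mul_const l).smul_const
    (innerSL ℝ e)
  have hsum : ∑ i, ⟪e, stdOrthonormalBasis ℝ E i⟫_ℝ ^ 2 = ‖e‖ ^ 2 :=
    (stdOrthonormalBasis ℝ E).sum_sq_inner_left e
  simp only [innerSL_apply_apply] at h
  rw [laplacian_eq_sum_fderiv_fderiv (stdOrthonormalBasis ℝ E), fderiv_exp_mul_inner, h.fderiv,
    mul_pow, ← hsum, Finset.mul_sum, Finset.mul_sum]
  refine Finset.sum_congr rfl fun i _ ↦ ?_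
  simp only [ContinuousLinearMap.smulRight_apply, smul_apply,
    innerSL_apply_apply, smul_eq_mul]
  ring

theorem mul_laplacian_add_fderiv_nonpos_of_isLocalMax {u : E → ℝ} {x : E} (h : IsLocalMax u x)
    (hu : ContDiffAt ℝ 2 u x) {a : ℝ} (ha : 0 ≤ a) (b : E) : a * Δ u x + fderiv ℝ u x b ≤ 0 := by
  simpa [h.fderiv_eq_zero] using
    mul_nonpos_of_nonneg_of_nonpos ha (laplacian_nonpos_of_isLocalMax h hu)

theorem exists_notMem_isMaxOn {K U : Set E} (hK : IsCompact K) (hK₀ : K.Nonempty) (hU : IsOpen U)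
    (hUK : U ⊆ K) {v : E → ℝ} (hv : ContinuousOn v K) (hv₂ : ContDiffOn ℝ 2 v U) {a : E → ℝ}
    {b : E → E} (ha : ∀ x ∈ U, 0 ≤ a x) (h : ∀ x ∈ U, 0 < a x * Δ v x + fderiv ℝ v x (b x)) :
    ∃ z ∈ K \ U, IsMaxOn v K z := by
  obtain ⟨z, hzK, hz⟩ := hK.exists_isMaxOn hK₀ hv
  refine ⟨z, ⟨hzK, fun hzU ↦ ?_⟩, hz⟩
  have hUz : U ∈ 𝓝 z := hU.mem_nhds hzU
  exact (h z hzU).not_ge (mul_laplacian_add_fderiv_nonpos_of_isLocalMax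
    ((hz.on_subset hUK).isLocalMax hUz) (hv₂.contDiffAt hUz) (ha z hzU) (b z))

theorem mul_laplacian_add_fderiv_exp_pos {e : E} (he : ‖e‖ = 1) {a l : ℝ} (hl : 0 < l)
    {b : E} (hb : ‖b‖ < l * a) (x : E) :
    0 < a * Δ (fun y ↦ Real.exp (l * ⟪e, y⟫_ℝ)) x +
      fderiv ℝ (fun y ↦ Real.exp (l * ⟪e, y⟫_ℝ)) x b := by
  have hinner : -‖b‖ ≤ ⟪e, b⟫_ℝ := by
    simpa [he] using (abs_le.1 (abs_real_inner_le_norm e b)).1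
  have hpos : 0 < l * (l * a + ⟪e, b⟫_ℝ) := mul_pos hl (by linarith)
  calc 0 < Real.exp (l * ⟪e, x⟫_ℝ) * (l * (l * a + ⟪e, b⟫_ℝ)) := mul_pos (Real.exp_pos _) hpos
    _ = _ := by
      simp only [laplacian_exp_mul_inner, fderiv_exp_mul_inner, he, smul_apply,
        innerSL_apply_apply, smul_eq_mul]
      ring

theorem mul_laplacian_add_fderiv_add_smul {u ψ : E → ℝ} {x : E} (hu : ContDiffAt ℝ 2 u x)
    (hψ : ContDiffAt ℝ 2 ψ x) (a η : ℝ) (b : E) :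
    a * Δ (u + η • ψ) x + fderiv ℝ (u + η • ψ) x b =
      (a * Δ u x + fderiv ℝ u x b) + η * (a * Δ ψ x + fderiv ℝ ψ x b) := by
  have hψ' := hψ.differentiableAt two_ne_zero
  have hψη : ContDiffAt ℝ 2 (η • ψ) x := hψ.const_smul η
  rw [hu.laplacian_add hψη, laplacian_smul η hψ,
    fderiv_add (hu.differentiableAt two_ne_zero) (hψη.differentiableAt two_ne_zero),
    fderiv_const_smul hψ']
  simp only [add_apply, smul_apply, smul_eq_mul]
  ring

theorem le_of_mul_laplacian_add_fderiv_nonneg [Nontrivial E] {K U : Set E} (hK : IsCompact K)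
    (hU : IsOpen U) (hUK : U ⊆ K) {u : E → ℝ} (hu : ContinuousOn u K)
    (hu₂ : ContDiffOn ℝ 2 u U) {a : E → ℝ} {b : E → E} {Λ : ℝ} (ha : ∀ x ∈ U, 0 < a x)
    (hb : ∀ x ∈ U, ‖b x‖ ≤ Λ * a x) (h : ∀ x ∈ U, 0 ≤ a x * Δ u x + fderiv ℝ u x (b x))
    {B : ℝ} (hB : ∀ x ∈ K \ U, u x ≤ B) {x : E} (hx : x ∈ K) : u x ≤ B := by
  obtain ⟨e, he⟩ := exists_norm_eq E zero_le_one
  set l : ℝ := |Λ| + 1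
  have hl : 0 < l := by positivity
  set ψ : E → ℝ := fun y ↦ Real.exp (l * ⟪e, y⟫_ℝ)
  have hψ : ContDiff ℝ 2 ψ := (contDiff_const.mul (innerSL ℝ e).contDiff).exp
  obtain ⟨P, hP⟩ := (hK.image hψ.continuous).bddAbove
  have hbound (η : ℝ) (hη : 0 < η) : u x ≤ B + η * P := by
    have hstrict (y : E) (hy : y ∈ U) :
        0 < a y * Δ (u + η • ψ) y + fderiv ℝ (u + η • ψ) y (b y) := by
      have hb' : ‖b y‖ < l * a y := (hb y hy).trans_lt
        (mul_lt_mul_of_pos_right ((le_abs_self Λ).trans_lt (lt_add_one _)) (ha y hy))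
      rw [mul_laplacian_add_fderiv_add_smul (hu₂.contDiffAt (hU.mem_nhds hy)) hψ.contDiffAt]
      exact add_pos_of_nonneg_of_pos (h y hy)
        (mul_pos hη (mul_laplacian_add_fderiv_exp_pos he hl hb' y))
    obtain ⟨z, hz, hmax⟩ := exists_notMem_isMaxOn hK ⟨x, hx⟩ hU hUK
      (hu.add (hψ.continuous.const_smul η).continuousOn)
      (hu₂.add (hψ.const_smul η).contDiffOn) (fun y hy ↦ (ha y hy).le) hstrict
    calc u x ≤ u x + η * ψ x := le_add_of_nonneg_right (mul_pos hη (Real.exp_pos _)).le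
      _ ≤ u z + η * ψ z := hmax hx
      _ ≤ B + η * P := add_le_add (hB z hz)
        (mul_le_mul_of_nonneg_left (hP (mem_image_of_mem ψ hz.1)) hη.le)
  have hlim : Filter.Tendsto (fun η : ℝ ↦ B + η * P) (𝓝[>] 0) (𝓝 B) := by
    refine Filter.Tendsto.mono_left ?_ nhdsWithin_le_nhds
    simpa using (Continuous.tendsto (by fun_prop : Continuous fun η : ℝ ↦ B + η * P) 0)
  exact ge_of_tendsto hlim (by filter_upwards [self_mem_nhdsWithin] with η hη using hbound η hη)

end SecondOrder

section GradientEstimate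

open InnerProductSpace Laplacian Topology Module

variable {E : Type*} [NormedAddCommGroup E] [InnerProductSpace ℝ E]

/-- The harmonic quadratic polynomial `α (‖y‖² - n ⟪e, y⟫²) + β ⟪e, y⟫`, `n = dim E`, serving as a
barrier for harmonic functions that are odd across the hyperplane `e^⊥`. -/
noncomputable def oddBarrier (e : E) (α β : ℝ) (y : E) : ℝ :=
  α * (‖y‖ ^ 2 - finrank ℝ E * ⟪e, y⟫_ℝ ^ 2) + β * ⟪e, y⟫_ℝ

theorem contDiff_oddBarrier (e : E) (α β : ℝ) : ContDiff ℝ 2 (oddBarrier e α β) := by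
  have he : ContDiff ℝ 2 fun y : E ↦ ⟪e, y⟫_ℝ := (innerSL ℝ e).contDiff
  have hn : ContDiff ℝ 2 fun y : E ↦ ‖y‖ ^ 2 := contDiff_norm_sq ℝ
  unfold oddBarrier
  fun_prop

theorem fderiv_oddBarrier (e : E) (α β : ℝ) :
    fderiv ℝ (oddBarrier e α β) = fun y ↦ (2 * α) • innerSL ℝ y +
      (β - 2 * α * finrank ℝ E * ⟪e, y⟫_ℝ) • innerSL ℝ e := by
  funext y
  have he : HasFDerivAt (fun y : E ↦ ⟪e, y⟫_ℝ) (innerSL ℝ e) y := (innerSL ℝ e).hasFDerivAt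
  have hn : HasFDerivAt (fun y : E ↦ ‖y‖ ^ 2) (2 • innerSL ℝ y) y :=
    (hasStrictFDerivAt_norm_sq y).hasFDerivAt
  have h := ((hn.sub ((he.pow 2).const_mul (finrank ℝ E : ℝ))).const_mul α).add (he.const_mul β)
  refine h.fderiv.trans ?_
  ext w
  simp
  ring

theorem le_oddBarrier_of_norm_eq {e : E} (he : ‖e‖ = 1) {R N : ℝ} (hR : 0 < R) (hN : 0 ≤ N)
    {z : E} (hz : ‖z‖ = R) (hez : 0 ≤ ⟪e, z⟫_ℝ) :
    N ≤ oddBarrier e (N / R ^ 2) (N / R * finrank ℝ E) z := by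
  have hle : ⟪e, z⟫_ℝ ≤ R := by simpa [he, hz] using real_inner_le_norm e z
  have heq : oddBarrier e (N / R ^ 2) (N / R * finrank ℝ E) z =
      N + N / R ^ 2 * finrank ℝ E * (⟪e, z⟫_ℝ * (R - ⟪e, z⟫_ℝ)) := by
    simp only [oddBarrier, hz]
    field_simp
    ring
  rw [heq]
  exact le_add_of_nonneg_right
    (mul_nonneg (by positivity) (mul_nonneg hez (sub_nonneg.2 hle)))

theorem hasDerivAt_sub_reflection {u : E → ℝ} {c e : E} {u' : E →L[ℝ] ℝ}
    (hu : HasFDerivAt u u' c) :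
    HasDerivAt (fun t : ℝ ↦ u (c + t • e) - u (c + (ℝ ∙ e)ᗮ.reflection (t • e))) (2 * u' e) 0 := by
  have hpos : HasDerivAt (fun t : ℝ ↦ c + t • e) e 0 := by
    simpa using ((hasDerivAt_id (0 : ℝ)).smul_const e).const_add c
  have hneg : HasDerivAt (fun t : ℝ ↦ c + (ℝ ∙ e)ᗮ.reflection (t • e)) (-e) 0 := by
    simpa [Submodule.reflection_orthogonalComplement_singleton_eq_neg] using
      ((hasDerivAt_id (0 : ℝ)).smul_const (-e)).const_add c
  rw [two_mul, ← sub_neg_eq_add, ← map_neg]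
  exact (hu.comp_hasDerivAt_of_eq 0 hpos (by simp)).sub
    (hu.comp_hasDerivAt_of_eq 0 hneg (by simp))

variable [FiniteDimensional ℝ E]

theorem laplacian_oddBarrier {e : E} (he : ‖e‖ = 1) (α β : ℝ) (x : E) :
    Δ (oddBarrier e α β) x = 0 := by
  have hn : HasFDerivAt (fun y : E ↦ innerSL ℝ y) (innerSL ℝ (E := E)) x :=
    (innerSL ℝ (E := E)).hasFDerivAt
  have he' : HasFDerivAt (fun y : E ↦ ⟪e, y⟫_ℝ) (innerSL ℝ e) x := (innerSL ℝ e).hasFDerivAt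
  have h := (hn.fun_const_smul (2 * α)).fun_add
    (((he'.const_mul (2 * α * finrank ℝ E)).const_sub β).smul_const (innerSL ℝ e))
  have hsum : ∑ i, ⟪e, stdOrthonormalBasis ℝ E i⟫_ℝ ^ 2 = 1 := by
    rw [OrthonormalBasis.sum_sq_inner_left, he, one_pow]
  rw [laplacian_eq_sum_fderiv_fderiv (stdOrthonormalBasis ℝ E), fderiv_oddBarrier, h.fderiv]
  calc _ = ∑ i, (2 * α - 2 * α * finrank ℝ E * ⟪e, stdOrthonormalBasis ℝ E i⟫_ℝ ^ 2) := by
        refine Finset.sum_congr rfl fun i _ ↦ ?_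
        have hi : innerSL ℝ (stdOrthonormalBasis ℝ E i) (stdOrthonormalBasis ℝ E i) = 1 := by
          simp [innerSL_apply_apply]
        simp only [add_apply, smul_apply, ContinuousLinearMap.smulRight_apply, hi, smul_eq_mul,
          neg_apply, innerSL_apply_apply]
        ring
    _ = 0 := by
      simp only [Finset.sum_sub_distrib, ← Finset.mul_sum, hsum, Finset.sum_const,
        Finset.card_univ, Fintype.card_fin, nsmul_eq_mul]
      ring

theorem oddBarrier_smul_self_le [Nontrivial E] {e : E} (he : ‖e‖ = 1) {α : ℝ} (hα : 0 ≤ α)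
    (β t : ℝ) : oddBarrier e α β (t • e) ≤ β * t := by
  have hn : (1 : ℝ) ≤ finrank ℝ E := Nat.one_le_cast.2 finrank_pos
  have hsq : 0 ≤ α * (finrank ℝ E - 1) * t ^ 2 :=
    mul_nonneg (mul_nonneg hα (sub_nonneg.2 hn)) (sq_nonneg t)
  have heq : oddBarrier e α β (t • e) = β * t - α * (finrank ℝ E - 1) * t ^ 2 := by
    simp only [oddBarrier, norm_smul, he, inner_smul_right, real_inner_self_eq_norm_sq,
      Real.norm_eq_abs, mul_one, sq_abs, one_pow]
    ring
  linarith

theorem laplacian_comp_add_linearIsometryEquiv (f : E → ℝ) (c : E) (L : E ≃ₗᵢ[ℝ] E) (x : E) :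
    Δ (fun y ↦ f (c + L y)) x = Δ f (c + L x) := by
  have h := L.toContinuousLinearEquiv.iteratedFDerivWithin_comp_right (fun z ↦ f (c + z))
    uniqueDiffOn_univ (mem_univ (L x)) 2
  simp only [preimage_univ, iteratedFDerivWithin_univ] at h
  change iteratedFDeriv ℝ 2 (fun y ↦ f (c + L y)) x = _ at h
  rw [laplacian_eq_iteratedFDeriv_orthonormalBasis _ (stdOrthonormalBasis ℝ E),
    laplacian_eq_iteratedFDeriv_orthonormalBasis _ ((stdOrthonormalBasis ℝ E).map L)]
  refine Finset.sum_congr rfl fun i _ ↦ ?_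
  rw [h, iteratedFDeriv_comp_add_left']
  simp only [ContinuousMultilinearMap.compContinuousLinearMap_apply, OrthonormalBasis.map_apply]
  congr 1
  ext j
  fin_cases j <;> rfl

theorem harmonicAt_comp_add_linearIsometryEquiv {f : E → ℝ} {c : E} {L : E ≃ₗᵢ[ℝ] E} {x : E}
    (hf : HarmonicAt f (c + L x)) : HarmonicAt (fun y ↦ f (c + L y)) x := by
  have hL : ContDiff ℝ 2 fun y ↦ c + L y := contDiff_const.add L.contDiff
  refine ⟨hf.1.comp x hL.contDiffAt, ?_⟩
  filter_upwards [hL.continuous.continuousAt.tendsto.eventually hf.2] with y hy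
  rw [laplacian_comp_add_linearIsometryEquiv, hy, Pi.zero_apply, Pi.zero_apply]

theorem le_oddBarrier_of_harmonic [Nontrivial E] {e : E} (he : ‖e‖ = 1) {R : ℝ} (hR : 0 < R)
    {v : E → ℝ} (hv : HarmonicOnNhd v (Metric.closedBall 0 R)) {N : ℝ}
    (hN : ∀ y ∈ Metric.closedBall 0 R, v y ≤ N) (h₀ : ∀ y, ⟪e, y⟫_ℝ = 0 → v y = 0) {y : E}
    (hy : y ∈ Metric.closedBall 0 R) (hey : 0 ≤ ⟪e, y⟫_ℝ) :
    v y ≤ oddBarrier e (N / R ^ 2) (N / R * finrank ℝ E) y := by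
  set ψ := oddBarrier e (N / R ^ 2) (N / R * finrank ℝ E)
  have hψ : ContDiff ℝ 2 ψ := contDiff_oddBarrier e _ _
  have hN₀ : 0 ≤ N :=
    (h₀ 0 (inner_zero_right e)).ge.trans (hN 0 (Metric.mem_closedBall_self hR.le))
  have he_cont : Continuous fun z : E ↦ ⟪e, z⟫_ℝ := by fun_prop
  have hsub : Metric.ball 0 R ∩ (⟪e, ·⟫_ℝ) ⁻¹' Ioi 0 ⊆
      Metric.closedBall 0 R ∩ (⟪e, ·⟫_ℝ) ⁻¹' Ici 0 :=
    inter_subset_inter Metric.ball_subset_closedBall (preimage_mono Ioi_subset_Ici_self)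
  have hboundary : ∀ z ∈ (Metric.closedBall 0 R ∩ (⟪e, ·⟫_ℝ) ⁻¹' Ici 0) \
      (Metric.ball 0 R ∩ (⟪e, ·⟫_ℝ) ⁻¹' Ioi 0), (v - ψ) z ≤ 0 := by
    rintro z ⟨⟨hzR, hez⟩, hz⟩
    rcases (mem_Ici.1 (mem_preimage.1 hez)).eq_or_lt with hez₀ | hez₀
    · have : 0 ≤ N / R ^ 2 * ‖z‖ ^ 2 := by positivity
      simpa [ψ, oddBarrier, ← hez₀, h₀ z hez₀.symm] using this
    · have hzR' : ‖z‖ = R := le_antisymm (by simpa using hzR)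
        (not_lt.1 fun hlt ↦ hz ⟨by simpa using hlt, hez₀⟩)
      exact sub_nonpos.2 ((hN z hzR).trans (le_oddBarrier_of_norm_eq he hR hN₀ hzR' hez₀.le))
  have hΔ (z : E) (hz : z ∈ Metric.closedBall 0 R) : Δ (v - ψ) z = 0 := by
    rw [(hv z hz).1.laplacian_sub hψ.contDiffAt, (hv z hz).2.self_of_nhds, laplacian_oddBarrier he]
    simp
  have hcomp := le_of_mul_laplacian_add_fderiv_nonneg (u := v - ψ) (a := 1) (b := 0) (Λ := 0)
    ((isCompact_closedBall 0 R).inter_right (isClosed_Ici.preimage he_cont))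
    (Metric.isOpen_ball.inter (isOpen_Ioi.preimage he_cont)) hsub
    ((hv.continuousOn.sub hψ.continuous.continuousOn).mono inter_subset_left)
    (fun z hz ↦ ((hv z (hsub hz).1).1.sub hψ.contDiffAt).contDiffWithinAt) (by simp) (by simp)
    (fun z hz ↦ by simp [hΔ z (hsub hz).1]) hboundary ⟨hy, hey⟩
  simpa using hcomp

/-- The difference of `u` and its reflection in the hyperplane through `c` orthogonal to `e`
vanishes there, so that it stays below a linear-growth barrier on one side. -/
theorem fderiv_apply_le_of_harmonic [Nontrivial E] {u : E → ℝ} {c : E} {R M : ℝ} (hR : 0 < R)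
    (hu : HarmonicOnNhd u (Metric.closedBall c R)) (hM : ∀ x ∈ Metric.closedBall c R, |u x| ≤ M)
    {e : E} (he : ‖e‖ = 1) : fderiv ℝ u c e ≤ finrank ℝ E * M / R := by
  have hM₀ : 0 ≤ M := (abs_nonneg _).trans (hM c (Metric.mem_closedBall_self hR.le))
  set σ : E ≃ₗᵢ[ℝ] E := (ℝ ∙ e)ᗮ.reflection
  set v : E → ℝ := fun y ↦ u (c + y) - u (c + σ y)
  have hmem (L : E ≃ₗᵢ[ℝ] E) {y : E} (hy : y ∈ Metric.closedBall (0 : E) R) :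
      c + L y ∈ Metric.closedBall c R := by simpa using hy
  have hv : HarmonicOnNhd v (Metric.closedBall 0 R) := fun y hy ↦
    (harmonicAt_comp_add_linearIsometryEquiv (L := .refl ℝ E) (hu _ (hmem _ hy))).sub
      (harmonicAt_comp_add_linearIsometryEquiv (L := σ) (hu _ (hmem σ hy)))
  have hv_le (y : E) (hy : y ∈ Metric.closedBall (0 : E) R) : v y ≤ 2 * M := by
    have h₁ := (abs_le.1 (hM _ (hmem (.refl ℝ E) hy))).2
    have h₂ := (abs_le.1 (hM _ (hmem σ hy))).1
    simp only [v, LinearIsometryEquiv.coe_refl, id] at h₁ ⊢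
    linarith
  have hv₀ (y : E) (hy : ⟪e, y⟫_ℝ = 0) : v y = 0 := by
    have : σ y = y := Submodule.reflection_mem_subspace_eq_self
      (Submodule.mem_orthogonal_singleton_iff_inner_right.2 hy)
    simp [v, this]
  have hu' : HasFDerivAt u (fderiv ℝ u c) c :=
    ((hu c (Metric.mem_closedBall_self hR.le)).1.differentiableAt two_ne_zero).hasFDerivAt
  have hline : HasDerivAt (fun t : ℝ ↦ v (t • e)) (2 * fderiv ℝ u c e) 0 :=
    hasDerivAt_sub_reflection hu'
  have hslope : ∀ᶠ t : ℝ in 𝓝[>] 0,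
      t⁻¹ • (v ((0 + t) • e) - v ((0 : ℝ) • e)) ≤ 2 * M / R * finrank ℝ E := by
    filter_upwards [Ioc_mem_nhdsGT hR] with t ht
    have hle := le_oddBarrier_of_harmonic he hR hv hv_le hv₀ (y := t • e)
      (by simpa [norm_smul, he, abs_of_pos ht.1] using ht.2)
      (by simp [inner_smul_right, he, ht.1.le])
    rw [hv₀ ((0 : ℝ) • e) (by simp), sub_zero, zero_add, smul_eq_mul, inv_mul_le_iff₀ ht.1,
      mul_comm t]
    exact hle.trans (oddBarrier_smul_self_le he (by positivity) _ _)
  have := le_of_tendsto hline.tendsto_slope_zero_right hslope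
  calc fderiv ℝ u c e ≤ 2 * M / R * finrank ℝ E / 2 := by linarith
    _ = finrank ℝ E * M / R := by ring

theorem norm_fderiv_le_of_harmonic [Nontrivial E] {u : E → ℝ} {c : E} {R M : ℝ} (hR : 0 < R)
    (hu : HarmonicOnNhd u (Metric.closedBall c R)) (hM : ∀ x ∈ Metric.closedBall c R, |u x| ≤ M) :
    ‖fderiv ℝ u c‖ ≤ finrank ℝ E * M / R := by
  have hM₀ : 0 ≤ M := (abs_nonneg _).trans (hM c (Metric.mem_closedBall_self hR.le))
  refine ContinuousLinearMap.opNorm_le_of_unit_norm (by positivity) fun e he ↦ abs_le.2 ⟨?_, ?_⟩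
  · simpa [neg_le] using fderiv_apply_le_of_harmonic hR hu hM (e := -e) (by simpa using he)
  · exact fderiv_apply_le_of_harmonic hR hu hM he

end GradientEstimate

section DivGrad

open InnerProductSpace Laplacian Gradient Topology

variable {E : Type*} [NormedAddCommGroup E] [InnerProductSpace ℝ E]

/-- `a` takes equal values at points of `U` at the same distance from `c`, i.e. it is a function of
`|x - c|` on `U`. -/
def IsRadialOn (a : E → ℝ) (c : E) (U : Set E) : Prop :=
  ∀ x ∈ U, ∀ y ∈ U, dist x c = dist y c → a x = a y

theorem IsRadialOn.fderiv_apply_eq_zero {a : E → ℝ} {c : E} {U : Set E} (h : IsRadialOn a c U)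
    {x v : E} (hx : U ∈ 𝓝 x) (ha : DifferentiableAt ℝ a x) (hv : ⟪x - c, v⟫_ℝ = 0) :
    fderiv ℝ a x v = 0 := by
  have hline (w : E) : HasDerivAt (fun t : ℝ ↦ x + t • w) w 0 := by
    simpa using ((hasDerivAt_id (0 : ℝ)).smul_const w).const_add x
  have hmem (w : E) : ∀ᶠ t : ℝ in 𝓝 0, x + t • w ∈ U :=
    (hline w).continuousAt.eventually_mem (by simpa using hx)
  have hderiv (w : E) : HasDerivAt (fun t : ℝ ↦ a (x + t • w)) (fderiv ℝ a x w) 0 :=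
    ha.hasFDerivAt.comp_hasDerivAt_of_eq 0 (hline w) (by simp)
  have heq : (fun t : ℝ ↦ a (x + t • v)) =ᶠ[𝓝 0] fun t ↦ a (x + t • -v) := by
    filter_upwards [hmem v, hmem (-v)] with t h₁ h₂
    refine h _ h₁ _ h₂ ?_
    have hvt : ⟪x - c, t • v⟫_ℝ = 0 := by rw [inner_smul_right, hv, mul_zero]
    rw [dist_eq_norm, dist_eq_norm, smul_neg, add_sub_right_comm, add_sub_right_comm,
      ← sub_eq_add_neg, (norm_add_eq_sqrt_iff_real_inner_eq_zero).2 hvt,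
      (norm_sub_eq_sqrt_iff_real_inner_eq_zero).2 hvt]
  have := (hderiv v).unique ((hderiv (-v)).congr_of_eventuallyEq heq)
  rw [map_neg] at this
  linarith

theorem exists_norm_fderiv_le_mul {Ω K : Set E} (hΩ : IsOpen Ω) (hK : IsCompact K) (hKΩ : K ⊆ Ω)
    {a : E → ℝ} (ha : ContDiffOn ℝ 1 a Ω) (hpos : ∀ x ∈ K, 0 < a x) :
    ∃ Λ, ∀ x ∈ K, ‖fderiv ℝ a x‖ ≤ Λ * a x := by
  have hcont : ContinuousOn (fun x ↦ ‖fderiv ℝ a x‖ / a x) K :=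
    ((ha.continuousOn_fderiv_of_isOpen hΩ le_rfl).norm.mono hKΩ).div (ha.continuousOn.mono hKΩ)
      fun x hx ↦ (hpos x hx).ne'
  obtain ⟨Λ, hΛ⟩ := (hK.image_of_continuousOn hcont).bddAbove
  exact ⟨Λ, fun x hx ↦ (div_le_iff₀ (hpos x hx)).1 (hΛ (mem_image_of_mem _ hx))⟩

theorem exists_norm_fderiv_le_mul_of_const {Ω K : Set E} (hΩ : IsOpen Ω) (hK : IsCompact K)
    (hKΩ : K ⊆ Ω) {a : E → ℝ} (ha : ContDiffOn ℝ 1 a Ω) (hpos : ∀ x ∈ Ω, 0 < a x) {k : ℝ}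
    (hk : ∀ x ∈ Ω \ K, a x = k) : ∃ Λ, ∀ x ∈ Ω, ‖fderiv ℝ a x‖ ≤ Λ * a x := by
  obtain ⟨Λ, hΛ⟩ := exists_norm_fderiv_le_mul hΩ hK hKΩ ha fun x hx ↦ hpos x (hKΩ hx)
  refine ⟨|Λ|, fun x hx ↦ ?_⟩
  by_cases hxK : x ∈ K
  · exact (hΛ x hxK).trans (mul_le_mul_of_nonneg_right (le_abs_self Λ) (hpos x hx).le)
  · have hconst : a =ᶠ[𝓝 x] fun _ ↦ k := by
      filter_upwards [(hΩ.sdiff hK.isClosed).mem_nhds ⟨hx, hxK⟩] using hk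
    simpa [hconst.fderiv_eq] using mul_nonneg (abs_nonneg Λ) (hpos x hx).le

variable [FiniteDimensional ℝ E]

/-- `div (a ∇u)` in nondivergence form, `a Δu + ∇a · ∇u`. -/
noncomputable def divGrad (a u : E → ℝ) (x : E) : ℝ :=
  a x * Δ u x + fderiv ℝ u x (∇ a x)

theorem divGrad_neg (a u : E → ℝ) (x : E) : divGrad a (-u) x = -divGrad a u x := by
  simp only [divGrad, laplacian_neg, Pi.neg_apply, fderiv_neg, neg_apply]
  ring

theorem harmonicOnNhd_of_divGrad_eq_zero {U : Set E} (hU : IsOpen U) {a u : E → ℝ}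
    (hu : ContDiffOn ℝ 2 u U) {k : ℝ} (hk : k ≠ 0) (ha : ∀ x ∈ U, a x = k)
    (h : ∀ x ∈ U, divGrad a u x = 0) : HarmonicOnNhd u U := by
  refine fun x hx ↦ ⟨hu.contDiffAt (hU.mem_nhds hx), ?_⟩
  filter_upwards [hU.mem_nhds hx] with y hy
  have hconst : a =ᶠ[𝓝 y] fun _ ↦ k := by filter_upwards [hU.mem_nhds hy] using ha
  have hgrad : ∇ a y = 0 := by simp [gradient, hconst.fderiv_eq]
  simpa [divGrad, ha y hy, hk, hgrad] using h y hy

theorem abs_le_of_divGrad_eq_zero [Nontrivial E] {K U : Set E} (hK : IsCompact K) (hU : IsOpen U)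
    (hUK : U ⊆ K) {a u : E → ℝ} (hpos : ∀ x ∈ U, 0 < a x) {Λ : ℝ}
    (hΛ : ∀ x ∈ U, ‖fderiv ℝ a x‖ ≤ Λ * a x) (hu : ContinuousOn u K) (hu₂ : ContDiffOn ℝ 2 u U)
    (h : ∀ x ∈ U, divGrad a u x = 0) {B : ℝ} (hB : ∀ x ∈ K \ U, |u x| ≤ B) {x : E} (hx : x ∈ K) :
    |u x| ≤ B := by
  have hgrad : ∀ x ∈ U, ‖∇ a x‖ ≤ Λ * a x := fun x hx ↦ by simpa [gradient] using hΛ x hx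
  refine abs_le'.2 ⟨?_, ?_⟩
  · exact le_of_mul_laplacian_add_fderiv_nonneg hK hU hUK hu hu₂ hpos hgrad
      (fun y hy ↦ (h y hy).ge) (fun y hy ↦ (abs_le'.1 (hB y hy)).1) hx
  · refine le_of_mul_laplacian_add_fderiv_nonneg (u := -u) hK hU hUK hu.neg hu₂.neg hpos hgrad
      (fun y hy ↦ ?_) (fun y hy ↦ (abs_le'.1 (hB y hy)).2) hx
    have := divGrad_neg a u y
    rw [h y hy, neg_zero] at this
    exact this.ge

end DivGrad

local notation "ℝ²" => EuclideanSpace ℝ (Fin 2)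

section PartialDerivatives

theorem contDiffOn_pd {Ω : Set ℝ²} (hΩ : IsOpen Ω) {n : WithTop ℕ∞} {f : ℝ² → ℝ}
    (hf : ContDiffOn ℝ (n + 1) f Ω) (i : Fin 2) : ContDiffOn ℝ n (pd i f) Ω :=
  (hf.fderiv_of_isOpen hΩ le_rfl).clm_apply contDiffOn_const

theorem pd_pd {f : ℝ² → ℝ} {x : ℝ²} (hf : ContDiffAt ℝ 2 f x) (i j : Fin 2) :
    pd i (pd j f) x =
      fderiv ℝ (fderiv ℝ f) x (EuclideanSpace.single i 1) (EuclideanSpace.single j 1) := by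
  change fderiv ℝ (fun y ↦ fderiv ℝ f y _) x _ = _
  rw [(hasFDerivAt_fderiv_apply hf _).fderiv, ContinuousLinearMap.flip_apply]

theorem pd_comm {f : ℝ² → ℝ} {x : ℝ²} (hf : ContDiffAt ℝ 2 f x) (i j : Fin 2) :
    pd i (pd j f) x = pd j (pd i f) x := by
  rw [pd_pd hf, pd_pd hf]
  exact hf.isSymmSndFDerivAt (by simp) _ _

theorem differentiableAt_pd {f : ℝ² → ℝ} {x : ℝ²} (hf : ContDiffAt ℝ 2 f x) (i : Fin 2) :
    DifferentiableAt ℝ (pd i f) x :=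
  (hasFDerivAt_fderiv_apply hf _).differentiableAt

theorem pd_mul {f g : ℝ² → ℝ} {x : ℝ²} (hf : DifferentiableAt ℝ f x)
    (hg : DifferentiableAt ℝ g x) (i : Fin 2) :
    pd i (fun y ↦ f y * g y) x = f x * pd i g x + g x * pd i f x := by
  simp [pd, fderiv_fun_mul hf hg]

theorem contDiff_coord_sub (i : Fin 2) (c : ℝ) {n : WithTop ℕ∞} :
    ContDiff ℝ n fun x : ℝ² ↦ x i - c := by
  fun_prop

theorem pd_coord_sub_mul {f : ℝ² → ℝ} {x : ℝ²} (hf : DifferentiableAt ℝ f x) (i j : Fin 2)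
    (c : ℝ) :
    pd i (fun y ↦ (y j - c) * f y) x = (x j - c) * pd i f x + if j = i then f x else 0 := by
  have hcoord : HasFDerivAt (fun y : ℝ² ↦ y j - c) (EuclideanSpace.proj j : ℝ² →L[ℝ] ℝ) x :=
    (EuclideanSpace.proj j : ℝ² →L[ℝ] ℝ).hasFDerivAt.sub_const c
  rw [pd_mul hcoord.differentiableAt hf, pd.eq_def i fun y : ℝ² ↦ y j - c, hcoord.fderiv]
  simp

theorem pd_neg (i : Fin 2) (f : ℝ² → ℝ) : pd i (-f) = -pd i f := by
  funext x
  simp [pd, fderiv_neg]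

theorem fderiv_apply_eq_sum_pd (f : ℝ² → ℝ) (x v : ℝ²) :
    fderiv ℝ f x v = v 0 * pd 0 f x + v 1 * pd 1 f x := by
  have hv : v = v 0 • EuclideanSpace.single 0 (1 : ℝ) + v 1 • EuclideanSpace.single 1 (1 : ℝ) := by
    ext i
    fin_cases i <;> simp
  conv_lhs => rw [hv]
  simp [pd]

theorem norm_fderiv_sq (f : ℝ² → ℝ) (x : ℝ²) :
    ‖fderiv ℝ f x‖ ^ 2 = pd 0 f x ^ 2 + pd 1 f x ^ 2 := by
  rw [(EuclideanSpace.basisFun (Fin 2) ℝ).norm_dual (fderiv ℝ f x)]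
  simp [Fin.sum_univ_two, pd]

open InnerProductSpace Gradient in
theorem divGrad_eq_pd {a u : ℝ² → ℝ} {x : ℝ²} (hu : ContDiffAt ℝ 2 u x) :
    divGrad a u x = a x * (pd 0 (pd 0 u) x + pd 1 (pd 1 u) x) +
      (pd 0 a x * pd 0 u x + pd 1 a x * pd 1 u x) := by
  have hgrad (i : Fin 2) : ∇ a x i = pd i a x := by
    rw [pd, gradient, ← InnerProductSpace.toDual_symm_apply, EuclideanSpace.inner_single_right]
    simp
  rw [divGrad, laplacian_eq_sum_fderiv_fderiv (EuclideanSpace.basisFun (Fin 2) ℝ),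
    fderiv_apply_eq_sum_pd u x, hgrad, hgrad]
  simp only [Fin.sum_univ_two, pd_pd hu, EuclideanSpace.basisFun_apply]

end PartialDerivatives

section Conjugate

open Topology

/-- The derivative `∂u/∂θ` in polar coordinates centered at `c`. -/
noncomputable def angularDeriv (c : ℝ²) (u : ℝ² → ℝ) (x : ℝ²) : ℝ :=
  (x 0 - c 0) * pd 1 u x - (x 1 - c 1) * pd 0 u x

/-- The derivative `r ∂u/∂r` in polar coordinates centered at `c`. -/
noncomputable def radialDeriv (c : ℝ²) (u : ℝ² → ℝ) (x : ℝ²) : ℝ :=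
  (x 0 - c 0) * pd 0 u x + (x 1 - c 1) * pd 1 u x

/-- `w` is a stream function on `U` for the flux `a ∇T`: the Cauchy–Riemann equations
`∇w = (a ∇T)^⊥` with weight `a`. -/
def AreConjugateOn (a T w : ℝ² → ℝ) (U : Set ℝ²) : Prop :=
  ∀ x ∈ U, pd 0 w x = -(a x * pd 1 T x) ∧ pd 1 w x = a x * pd 0 T x

theorem AreConjugateOn.inv {a T w : ℝ² → ℝ} {U : Set ℝ²} (h : AreConjugateOn a T w U)
    (ha : ∀ x ∈ U, a x ≠ 0) : AreConjugateOn a⁻¹ w (-T) U := by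
  intro x hx
  obtain ⟨h₀, h₁⟩ := h x hx
  have := ha x hx
  simp only [pd_neg, Pi.neg_apply, Pi.inv_apply, h₀, h₁]
  constructor <;> field_simp

theorem AreConjugateOn.divGrad_eq_zero {a T w : ℝ² → ℝ} {U : Set ℝ²} (hU : IsOpen U)
    (h : AreConjugateOn a T w U) (ha : DifferentiableOn ℝ a U) (hT : ContDiffOn ℝ 2 T U)
    (hw : ContDiffOn ℝ 2 w U) {x : ℝ²} (hx : x ∈ U) : divGrad a T x = 0 := by
  have hxU := hU.mem_nhds hx
  have ha' := (ha x hx).differentiableAt hxU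
  have hdT := differentiableAt_pd (hT.contDiffAt hxU)
  have h₀ : pd 1 (pd 0 w) x = -(a x * pd 1 (pd 1 T) x + pd 1 T x * pd 1 a x) := by
    have heq : pd 0 w =ᶠ[𝓝 x] -fun y ↦ a y * pd 1 T y := by
      filter_upwards [hxU] with y hy using (h y hy).1
    rw [← pd_mul ha' (hdT 1), ← Pi.neg_apply, ← pd_neg, pd, heq.fderiv_eq, pd]
  have h₁ : pd 0 (pd 1 w) x = a x * pd 0 (pd 0 T) x + pd 0 T x * pd 0 a x := by
    have heq : pd 1 w =ᶠ[𝓝 x] fun y ↦ a y * pd 0 T y := by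
      filter_upwards [hxU] with y hy using (h y hy).2
    rw [← pd_mul ha' (hdT 0), pd, heq.fderiv_eq, pd]
  rw [divGrad_eq_pd (hT.contDiffAt hxU)]
  linarith [pd_comm (hw.contDiffAt hxU) 0 1]

variable {Ω : Set ℝ²} {a u : ℝ² → ℝ}

theorem contDiffOn_angularDeriv (hΩ : IsOpen Ω) {n : WithTop ℕ∞} (hu : ContDiffOn ℝ (n + 1) u Ω)
    (c : ℝ²) : ContDiffOn ℝ n (angularDeriv c u) Ω :=
  ((contDiff_coord_sub 0 _).contDiffOn.mul (contDiffOn_pd hΩ hu 1)).sub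
    ((contDiff_coord_sub 1 _).contDiffOn.mul (contDiffOn_pd hΩ hu 0))

theorem contDiffOn_radialDeriv (hΩ : IsOpen Ω) {n : WithTop ℕ∞} (hu : ContDiffOn ℝ (n + 1) u Ω)
    (c : ℝ²) : ContDiffOn ℝ n (radialDeriv c u) Ω :=
  ((contDiff_coord_sub 0 _).contDiffOn.mul (contDiffOn_pd hΩ hu 0)).add
    ((contDiff_coord_sub 1 _).contDiffOn.mul (contDiffOn_pd hΩ hu 1))

theorem pd_angularDeriv {x : ℝ²} (hu : ContDiffAt ℝ 2 u x) (c : ℝ²) (i : Fin 2) :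
    pd i (angularDeriv c u) x =
      ((x 0 - c 0) * pd i (pd 1 u) x + if 0 = i then pd 1 u x else 0) -
        ((x 1 - c 1) * pd i (pd 0 u) x + if 1 = i then pd 0 u x else 0) := by
  have hd (j k : Fin 2) : DifferentiableAt ℝ (fun y : ℝ² ↦ (y j - c j) * pd k u y) x :=
    ((contDiff_coord_sub j _).differentiable one_ne_zero x).mul (differentiableAt_pd hu k)
  rw [← pd_coord_sub_mul (differentiableAt_pd hu 1), ← pd_coord_sub_mul (differentiableAt_pd hu 0)]
  exact congrArg (· (EuclideanSpace.single i 1)) (fderiv_fun_sub (hd 0 1) (hd 1 0))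

theorem pd_radialDeriv {x : ℝ²} (hu : ContDiffAt ℝ 2 u x) (c : ℝ²) (i : Fin 2) :
    pd i (radialDeriv c u) x =
      ((x 0 - c 0) * pd i (pd 0 u) x + if 0 = i then pd 0 u x else 0) +
        ((x 1 - c 1) * pd i (pd 1 u) x + if 1 = i then pd 1 u x else 0) := by
  have hd (j : Fin 2) : DifferentiableAt ℝ (fun y : ℝ² ↦ (y j - c j) * pd j u y) x :=
    ((contDiff_coord_sub j _).differentiable one_ne_zero x).mul (differentiableAt_pd hu j)
  rw [← pd_coord_sub_mul (differentiableAt_pd hu 0), ← pd_coord_sub_mul (differentiableAt_pd hu 1)]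
  exact congrArg (· (EuclideanSpace.single i 1)) (fderiv_fun_add (hd 0) (hd 1))

theorem IsRadialOn.angularDeriv_eq_zero {c : ℝ²} {U : Set ℝ²} (h : IsRadialOn a c U) {x : ℝ²}
    (hx : U ∈ 𝓝 x) (ha : DifferentiableAt ℝ a x) : angularDeriv c a x = 0 := by
  have := h.fderiv_apply_eq_zero hx ha (v := !₂[-(x 1 - c 1), x 0 - c 0]) (by
    simp only [PiLp.inner_apply, Fin.sum_univ_two, RCLike.inner_apply, conj_trivial]
    simp
    ring)
  rw [fderiv_apply_eq_sum_pd] at this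
  simp only [Matrix.cons_val_zero, Matrix.cons_val_one] at this
  rw [angularDeriv]
  linarith

theorem areConjugateOn_angularDeriv_radialDeriv {U : Set ℝ²} (hU : IsOpen U) {c : ℝ²}
    (hrad : IsRadialOn a c U) (ha : DifferentiableOn ℝ a U) (hu : ContDiffOn ℝ 2 u U)
    (h : ∀ x ∈ U, divGrad a u x = 0) :
    AreConjugateOn a (angularDeriv c u) (fun x ↦ a x * radialDeriv c u x) U := by
  intro x hx
  have hxU := hU.mem_nhds hx
  have ha' := (ha x hx).differentiableAt hxU
  have hu' := hu.contDiffAt hxU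
  have hang : angularDeriv c a x = 0 := hrad.angularDeriv_eq_zero hxU ha'
  have hpde := h x hx
  have hdR : DifferentiableAt ℝ (radialDeriv c u) x :=
    ((contDiffOn_radialDeriv hU (n := 1) hu c).contDiffAt hxU).differentiableAt one_ne_zero
  rw [angularDeriv] at hang
  rw [divGrad_eq_pd hu'] at hpde
  rw [pd_mul ha' hdR, pd_mul ha' hdR]
  simp only [pd_radialDeriv hu', pd_angularDeriv hu', pd_comm hu' 1 0, radialDeriv, one_ne_zero,
    zero_ne_one, if_true, if_false, add_zero]
  constructor
  · linear_combination (x 0 - c 0) * hpde - pd 1 u x * hang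
  · linear_combination (x 1 - c 1) * hpde + pd 0 u x * hang

theorem angularDeriv_sq_add_radialDeriv_sq (c : ℝ²) (u : ℝ² → ℝ) (x : ℝ²) :
    angularDeriv c u x ^ 2 + radialDeriv c u x ^ 2 = (dist x c * ‖fderiv ℝ u x‖) ^ 2 := by
  rw [mul_pow, norm_fderiv_sq, EuclideanSpace.dist_sq_eq, Fin.sum_univ_two, Real.dist_eq,
    Real.dist_eq, sq_abs, sq_abs, angularDeriv, radialDeriv]
  ring

theorem abs_angularDeriv_le (c : ℝ²) (u : ℝ² → ℝ) (x : ℝ²) :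
    |angularDeriv c u x| ≤ dist x c * ‖fderiv ℝ u x‖ :=
  abs_le_of_sq_le_sq (by nlinarith [angularDeriv_sq_add_radialDeriv_sq c u x]) (by positivity)

theorem abs_radialDeriv_le (c : ℝ²) (u : ℝ² → ℝ) (x : ℝ²) :
    |radialDeriv c u x| ≤ dist x c * ‖fderiv ℝ u x‖ :=
  abs_le_of_sq_le_sq (by nlinarith [angularDeriv_sq_add_radialDeriv_sq c u x]) (by positivity)

theorem dist_mul_norm_fderiv_le (c : ℝ²) (u : ℝ² → ℝ) (x : ℝ²) :
    dist x c * ‖fderiv ℝ u x‖ ≤ |angularDeriv c u x| + |radialDeriv c u x| := by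
  refine (abs_le_of_sq_le_sq' ?_ (by positivity)).2
  rw [← angularDeriv_sq_add_radialDeriv_sq, add_sq, sq_abs, sq_abs]
  have : 0 ≤ |angularDeriv c u x| * |radialDeriv c u x| := by positivity
  linarith

theorem AreConjugateOn.abs_le (hΩ : IsOpen Ω) {K U : Set ℝ²} (hK : IsCompact K) (hKΩ : K ⊆ Ω)
    (hU : IsOpen U) (hUK : U ⊆ K) (ha : ContDiffOn ℝ 1 a Ω) (hpos : ∀ x ∈ Ω, 0 < a x)
    {T w : ℝ² → ℝ} (hT : ContDiffOn ℝ 2 T Ω) (hw : ContDiffOn ℝ 2 w Ω)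
    (h : AreConjugateOn a T w U) {B : ℝ} (hB : ∀ x ∈ K \ U, |T x| ≤ B) {x : ℝ²} (hx : x ∈ K) :
    |T x| ≤ B := by
  have hUΩ := hUK.trans hKΩ
  obtain ⟨Λ, hΛ⟩ := exists_norm_fderiv_le_mul hΩ hK hKΩ ha fun x hx ↦ hpos x (hKΩ hx)
  exact abs_le_of_divGrad_eq_zero hK hU hUK (fun x hx ↦ hpos x (hUΩ hx))
    (fun x hx ↦ hΛ x (hUK hx)) (hT.continuousOn.mono hKΩ) (hT.mono hUΩ)
    (fun x hx ↦ h.divGrad_eq_zero hU ((ha.differentiableOn one_ne_zero).mono hUΩ) (hT.mono hUΩ)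
      (hw.mono hUΩ) hx) hB hx

theorem norm_fderiv_le_of_divGrad_eq_zero_of_isRadialOn (hΩ : IsOpen Ω) {K U : Set ℝ²}
    (hK : IsCompact K) (hKΩ : K ⊆ Ω) (hU : IsOpen U) (hUK : U ⊆ K) {m M : ℝ} (hm : 0 < m)
    (ha : ContDiffOn ℝ 2 a Ω) (hmM : ∀ x ∈ Ω, a x ∈ Icc m M) (hu : ContDiffOn ℝ 3 u Ω)
    (h : ∀ x ∈ U, divGrad a u x = 0) {c : ℝ²} (hrad : IsRadialOn a c U) {ρ₀ ρ₁ : ℝ} (hρ₀ : 0 < ρ₀)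
    (hρ : ∀ x ∈ K, dist x c ∈ Icc ρ₀ ρ₁) {B : ℝ} (hB : ∀ x ∈ K \ U, ‖fderiv ℝ u x‖ ≤ B) {x : ℝ²}
    (hx : x ∈ K) : ‖fderiv ℝ u x‖ ≤ (1 + M / m) * (ρ₁ * B) / ρ₀ := by
  have hUΩ := hUK.trans hKΩ
  have hpos : ∀ x ∈ Ω, 0 < a x := fun x hx ↦ hm.trans_le (hmM x hx).1
  have hne : ∀ x ∈ Ω, a x ≠ 0 := fun x hx ↦ (hpos x hx).ne'
  have hT : ContDiffOn ℝ 2 (angularDeriv c u) Ω := contDiffOn_angularDeriv hΩ hu c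
  have hw : ContDiffOn ℝ 2 (fun x ↦ a x * radialDeriv c u x) Ω :=
    ha.mul (contDiffOn_radialDeriv hΩ hu c)
  have hconj := areConjugateOn_angularDeriv_radialDeriv hU hrad
    ((ha.differentiableOn two_ne_zero).mono hUΩ) ((hu.of_le (by norm_num)).mono hUΩ) h
  have hdB : ∀ x ∈ K \ U, dist x c * ‖fderiv ℝ u x‖ ≤ ρ₁ * B := fun x hx ↦
    mul_le_mul (hρ x hx.1).2 (hB x hx) (norm_nonneg _) (dist_nonneg.trans (hρ x hx.1).2)
  have hTx : |angularDeriv c u x| ≤ ρ₁ * B :=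
    hconj.abs_le hΩ hK hKΩ hU hUK (ha.of_le one_le_two) hpos hT hw
      (fun y hy ↦ (abs_angularDeriv_le c u y).trans (hdB y hy)) hx
  have hwx : |a x * radialDeriv c u x| ≤ M * (ρ₁ * B) := by
    refine (hconj.inv fun y hy ↦ hne y (hUΩ hy)).abs_le hΩ hK hKΩ hU hUK
      ((ha.of_le one_le_two).inv hne) (fun y hy ↦ inv_pos.2 (hpos y hy)) hw hT.neg
      (fun y hy ↦ ?_) hx
    rw [abs_mul, abs_of_pos (hpos y (hKΩ hy.1))]
    exact mul_le_mul (hmM y (hKΩ hy.1)).2 ((abs_radialDeriv_le c u y).trans (hdB y hy))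
      (abs_nonneg _) ((hpos y (hKΩ hy.1)).le.trans (hmM y (hKΩ hy.1)).2)
  have hRx : |radialDeriv c u x| ≤ M / m * (ρ₁ * B) := by
    rw [div_mul_eq_mul_div, le_div_iff₀' hm]
    refine le_trans ?_ hwx
    rw [abs_mul, abs_of_pos (hpos x (hKΩ hx))]
    exact mul_le_mul_of_nonneg_right (hmM x (hKΩ hx)).1 (abs_nonneg _)
  rw [le_div_iff₀' hρ₀]
  calc ρ₀ * ‖fderiv ℝ u x‖ ≤ dist x c * ‖fderiv ℝ u x‖ :=
        mul_le_mul_of_nonneg_right (hρ x hx).1 (norm_nonneg _)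
    _ ≤ |angularDeriv c u x| + |radialDeriv c u x| := dist_mul_norm_fderiv_le c u x
    _ ≤ (1 + M / m) * (ρ₁ * B) := by linarith

end Conjugate

section Metric

variable {E : Type*} [NormedAddCommGroup E] [NormedSpace ℝ E]

theorem ball_subset_of_le_infDist_frontier {Ω : Set E} (hΩ : IsOpen Ω) {z : E} (hz : z ∈ Ω) {r : ℝ}
    (hr₀ : 0 < r) (hr : r ≤ Metric.infDist z (frontier Ω)) : Metric.ball z r ⊆ Ω := by
  refine (convex_ball z r).isPreconnected.subset_of_closure_inter_subset hΩ
    ⟨z, Metric.mem_ball_self hr₀, hz⟩ fun y ⟨hy, hyz⟩ ↦ by_contra fun hyΩ ↦ ?_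
  refine disjoint_left.1 Metric.disjoint_ball_infDist (Metric.ball_subset_ball hr hyz) ?_
  rw [hΩ.frontier_eq]
  exact ⟨hy, hyΩ⟩

theorem infDist_sphere_of_le_dist {x c : E} {r : ℝ} (hr : 0 < r) (h : r ≤ dist x c) :
    Metric.infDist x (Metric.sphere c r) = dist x c - r := by
  have hd : 0 < dist c x := by rw [dist_comm]; exact hr.trans_le h
  have hproj : AffineMap.lineMap c x (r / dist c x) ∈ Metric.sphere c r := by
    rw [Metric.mem_sphere, dist_lineMap_left, Real.norm_of_nonneg (by positivity),
      div_mul_cancel₀ _ hd.ne']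
  refine le_antisymm ?_ ((Metric.le_infDist ⟨_, hproj⟩).2 fun y hy ↦ ?_)
  · refine (Metric.infDist_le_dist_of_mem hproj).trans_eq ?_
    rw [dist_comm x c] at h ⊢
    rw [dist_comm x, dist_lineMap_right, Real.norm_of_nonneg
      (sub_nonneg.2 ((div_le_one hd).2 h)), one_sub_mul, div_mul_cancel₀ _ hd.ne']
  · rw [← Metric.mem_sphere.1 hy]
    linarith [dist_triangle x y c]

theorem norm_fderiv_le_sSup_of_isCompact {Ω K : Set E} (hΩ : IsOpen Ω) (hK : IsCompact K)
    (hKΩ : K ⊆ Ω) {u : E → ℝ} (hu : ContDiffOn ℝ 1 u Ω) {x : E} (hx : x ∈ K) :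
    ‖fderiv ℝ u x‖ ≤ sSup ((fun y ↦ ‖fderiv ℝ u y‖) '' K) :=
  le_csSup (hK.image_of_continuousOn
    ((hu.continuousOn_fderiv_of_isOpen hΩ le_rfl).norm.mono hKΩ)).bddAbove (mem_image_of_mem _ hx)

end Metric

open Module InnerProductSpace in
theorem norm_fderiv_le_of_divGrad_eq_zero_of_const {E : Type*} [NormedAddCommGroup E]
    [InnerProductSpace ℝ E] [FiniteDimensional ℝ E] [Nontrivial E] {a u : E → ℝ} {x : E} {r : ℝ}
    (hr : 0 < r) (hu : ContDiffOn ℝ 2 u (Metric.ball x r)) {k : ℝ} (hk : k ≠ 0)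
    (ha : ∀ y ∈ Metric.ball x r, a y = k) (h : ∀ y ∈ Metric.ball x r, divGrad a u y = 0) {N : ℝ}
    (hN : ∀ y ∈ Metric.ball x r, |u y| ≤ N) : ‖fderiv ℝ u x‖ ≤ finrank ℝ E * N / (r / 2) := by
  have hsub : Metric.closedBall x (r / 2) ⊆ Metric.ball x r :=
    Metric.closedBall_subset_ball (half_lt_self hr)
  exact norm_fderiv_le_of_harmonic (half_pos hr)
    (fun y hy ↦ harmonicOnNhd_of_divGrad_eq_zero Metric.isOpen_ball hu hk ha h y (hsub hy))
    fun y hy ↦ hN y (hsub hy)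

section TwoDisks

/-- The conductivity `a` on `Ω` of two inclusions, the unit disks around `c` and `c'`, with values
`k` and `k'`, in a matrix of conductivity `1`: it is exact outside the `ε`-neighborhoods of the two
circles, where it is a function of the distance to the center only. -/
structure IsTwoDiskConductivity (a : ℝ² → ℝ) (Ω : Set ℝ²) (c c' : ℝ²) (ε k k' : ℝ) : Prop where
  eq_left : ∀ x ∈ Ω, dist x c ≤ 1 - ε → a x = k
  eq_right : ∀ x ∈ Ω, dist x c' ≤ 1 - ε → a x = k'
  eq_one : ∀ x ∈ Ω, 1 + ε ≤ dist x c → 1 + ε ≤ dist x c' → a x = 1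
  radial_left : IsRadialOn a c {x ∈ Ω | |dist x c - 1| < ε}
  radial_right : IsRadialOn a c' {x ∈ Ω | |dist x c' - 1| < ε}

namespace IsTwoDiskConductivity

variable {a u : ℝ² → ℝ} {Ω : Set ℝ²} {c c' : ℝ²} {ε k k' : ℝ}

theorem symm (h : IsTwoDiskConductivity a Ω c c' ε k k') :
    IsTwoDiskConductivity a Ω c' c ε k' k :=
  ⟨h.eq_right, h.eq_left, fun x hx h₁ h₂ ↦ h.eq_one x hx h₂ h₁, h.radial_right, h.radial_left⟩

theorem isRadialOn (h : IsTwoDiskConductivity a Ω c c' ε k k') :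
    IsRadialOn a c {x ∈ Ω | dist x c < dist x c'} := by
  rintro x ⟨hx, hxc⟩ y ⟨hy, hyc⟩ hxy
  rcases le_or_gt (dist x c) (1 - ε) with hin | hin
  · rw [h.eq_left x hx hin, h.eq_left y hy (hxy ▸ hin)]
  rcases le_or_gt (1 + ε) (dist x c) with hout | hout
  · rw [h.eq_one x hx hout (hout.trans hxc.le),
      h.eq_one y hy (hxy ▸ hout) ((hxy ▸ hout).trans hyc.le)]
  have hring : |dist x c - 1| < ε := abs_lt.2 ⟨by linarith, by linarith⟩
  exact h.radial_left x ⟨hx, hring⟩ y ⟨hy, hxy ▸ hring⟩ hxy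

theorem exists_eq_const_of_mem_ball (h : IsTwoDiskConductivity a Ω c c' ε k k') {x : ℝ²}
    (hxc : dist x c ≤ dist x c') {r : ℝ} (hball : Metric.ball x r ⊆ Ω)
    (hx : dist x c ≤ 1 - ε - r ∨ 1 + ε + r ≤ dist x c) : ∃ b, ∀ y ∈ Metric.ball x r, a y = b := by
  rcases hx with hx | hx
  · refine ⟨k, fun y hy ↦ h.eq_left y (hball hy) ?_⟩
    linarith [dist_triangle y x c, Metric.mem_ball.1 hy]
  · refine ⟨1, fun y hy ↦ h.eq_one y (hball hy) ?_ ?_⟩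
    · linarith [dist_triangle_left x c y, Metric.mem_ball.1 hy]
    · linarith [dist_triangle_left x c' y, Metric.mem_ball.1 hy]

theorem abs_le_of_frontier (h : IsTwoDiskConductivity a Ω c c' ε k k') (hΩ : IsOpen Ω)
    (hΩb : Bornology.IsBounded Ω) (hc : Metric.closedBall c (1 + ε) ⊆ Ω)
    (hc' : Metric.closedBall c' (1 + ε) ⊆ Ω) (ha : ContDiffOn ℝ 1 a Ω) (hpos : ∀ x ∈ Ω, 0 < a x)
    (hu : ContDiffOn ℝ 2 u Ω) (huc : ContinuousOn u (closure Ω))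
    (hpde : ∀ x ∈ Ω, divGrad a u x = 0) {N : ℝ} (hN : ∀ x ∈ frontier Ω, |u x| ≤ N) {x : ℝ²}
    (hx : x ∈ Ω) : |u x| ≤ N := by
  have hconst : ∀ y ∈ Ω \ (Metric.closedBall c (1 + ε) ∪ Metric.closedBall c' (1 + ε)),
      a y = 1 := by
    rintro y ⟨hy, hyc⟩
    simp only [mem_union, Metric.mem_closedBall, not_or, not_le] at hyc
    exact h.eq_one y hy hyc.1.le hyc.2.le
  obtain ⟨Λ, hΛ⟩ := exists_norm_fderiv_le_mul_of_const hΩ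
    ((isCompact_closedBall c _).union (isCompact_closedBall c' _)) (union_subset hc hc') ha hpos
    hconst
  rw [hΩ.frontier_eq] at hN
  exact abs_le_of_divGrad_eq_zero hΩb.isCompact_closure hΩ subset_closure hpos hΛ huc hu hpde hN
    (subset_closure hx)

theorem norm_fderiv_le_of_dist_le_or_le (h : IsTwoDiskConductivity a Ω c c' ε k k') {μ : ℝ}
    (hμ : 0 < μ) (hε : ε ≤ μ / 2) (hpos : ∀ x ∈ Ω, 0 < a x) (hu : ContDiffOn ℝ 2 u Ω)
    (hpde : ∀ x ∈ Ω, divGrad a u x = 0) {N : ℝ} (hN : ∀ x ∈ Ω, |u x| ≤ N) {x : ℝ²}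
    (hball : Metric.ball x μ ⊆ Ω) (hxc : dist x c ≤ dist x c')
    (hx : dist x c ≤ 1 - μ ∨ 1 + μ ≤ dist x c) : ‖fderiv ℝ u x‖ ≤ 8 * N / μ := by
  have hsub : Metric.ball x (μ / 2) ⊆ Ω :=
    (Metric.ball_subset_ball (half_le_self hμ.le)).trans hball
  obtain ⟨b, hb⟩ := h.exists_eq_const_of_mem_ball hxc hsub
    (hx.imp (fun hx ↦ by linarith) fun hx ↦ by linarith)
  have hb₀ : b ≠ 0 := by
    rw [← hb x (Metric.mem_ball_self (half_pos hμ))]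
    exact (hpos x (hball (Metric.mem_ball_self hμ))).ne'
  refine (norm_fderiv_le_of_divGrad_eq_zero_of_const (half_pos hμ) (hu.mono hsub) hb₀ hb
    (fun y hy ↦ hpde y (hsub hy)) fun y hy ↦ hN y (hsub hy)).trans_eq ?_
  rw [finrank_euclideanSpace_fin]
  push_cast
  ring

theorem norm_fderiv_le_of_mem_annulus (h : IsTwoDiskConductivity a Ω c c' ε k k') (hΩ : IsOpen Ω)
    {ρ₀ ρ₁ : ℝ} (hρ₀ : 0 < ρ₀) (hc : Metric.closedBall c ρ₁ ⊆ Ω) {m M : ℝ} (hm : 0 < m)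
    (ha : ContDiffOn ℝ 2 a Ω) (hmM : ∀ x ∈ Ω, a x ∈ Icc m M) (hu : ContDiffOn ℝ 3 u Ω)
    (hpde : ∀ x ∈ Ω, divGrad a u x = 0) {B : ℝ}
    (hB : ∀ x, dist x c ∈ Icc ρ₀ ρ₁ → dist x c ≤ dist x c' →
      (dist x c = ρ₀ ∨ dist x c = ρ₁ ∨ dist x c = dist x c') → ‖fderiv ℝ u x‖ ≤ B)
    {x : ℝ²} (hx : dist x c ∈ Icc ρ₀ ρ₁) (hxc : dist x c ≤ dist x c') :
    ‖fderiv ℝ u x‖ ≤ (1 + M / m) * (ρ₁ * B) / ρ₀ := by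
  have hcont (b : ℝ²) : Continuous (dist · b) := continuous_id.dist continuous_const
  set K : Set ℝ² := {y | dist y c ∈ Icc ρ₀ ρ₁ ∧ dist y c ≤ dist y c'}
  set U : Set ℝ² := {y | dist y c ∈ Ioo ρ₀ ρ₁ ∧ dist y c < dist y c'}
  have hU : IsOpen U := (isOpen_Ioo.preimage (hcont c)).inter (isOpen_lt (hcont c) (hcont c'))
  have hK : IsCompact K := (isCompact_closedBall c ρ₁).of_isClosed_subset
    ((isClosed_Icc.preimage (hcont c)).inter (isClosed_le (hcont c) (hcont c')))
    fun y hy ↦ hy.1.2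
  have hUK : U ⊆ K := fun y hy ↦ ⟨Ioo_subset_Icc_self hy.1, hy.2.le⟩
  have hKΩ : K ⊆ Ω := fun y hy ↦ hc hy.1.2
  refine norm_fderiv_le_of_divGrad_eq_zero_of_isRadialOn hΩ hK hKΩ hU hUK hm ha hmM hu
    (fun y hy ↦ hpde y (hKΩ (hUK hy)))
    (fun y hy z hz ↦ h.isRadialOn y ⟨hKΩ (hUK hy), hy.2⟩ z ⟨hKΩ (hUK hz), hz.2⟩)
    hρ₀ (fun y hy ↦ hy.1) (fun y hy ↦ hB y hy.1.1 hy.1.2 ?_) ⟨hx, hxc⟩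
  by_contra! hne
  exact hy.2 ⟨⟨hy.1.1.1.lt_of_ne' hne.1, hy.1.1.2.lt_of_ne hne.2.1⟩, hy.1.2.lt_of_ne hne.2.2⟩

theorem norm_fderiv_le_of_dist_le (h : IsTwoDiskConductivity a Ω c c' ε k k') (hΩ : IsOpen Ω)
    {μ : ℝ} (hμ : μ ∈ Ioo (0 : ℝ) 1) (hε : ε ≤ μ / 2) (hc : Metric.ball c (1 + 2 * μ) ⊆ Ω)
    {m M : ℝ} (hm : 0 < m) (ha : ContDiffOn ℝ 2 a Ω) (hmM : ∀ x ∈ Ω, a x ∈ Icc m M)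
    (hu : ContDiffOn ℝ 3 u Ω) (hpde : ∀ x ∈ Ω, divGrad a u x = 0) {N : ℝ}
    (hN : ∀ x ∈ Ω, |u x| ≤ N) {B : ℝ} (hB₀ : 0 ≤ B)
    (hB : ∀ x, dist x c = dist x c' → dist x c ≤ 1 + μ → ‖fderiv ℝ u x‖ ≤ B) {x : ℝ²}
    (hball : Metric.ball x μ ⊆ Ω) (hxc : dist x c ≤ dist x c') :
    ‖fderiv ℝ u x‖ ≤ (1 + M / m) * ((1 + μ) * (B + 8 * N / μ)) / (1 - μ) := by
  obtain ⟨hμ₀, hμ₁⟩ := hμ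
  have hfar {y : ℝ²} := h.norm_fderiv_le_of_dist_le_or_le hμ₀ hε
    (fun x hx ↦ hm.trans_le (hmM x hx).1) (hu.of_le (by norm_num)) hpde hN (x := y)
  have hx := hball (Metric.mem_ball_self hμ₀)
  have hN₀ : 0 ≤ 8 * N / μ := by have := (abs_nonneg _).trans (hN x hx); positivity
  by_cases hann : dist x c ∈ Icc (1 - μ) (1 + μ)
  · refine h.norm_fderiv_le_of_mem_annulus hΩ (sub_pos.2 hμ₁)
      ((Metric.closedBall_subset_ball (by linarith)).trans hc) hm ha hmM hu hpde
      (fun y hy hyc hbdry ↦ ?_) hann hxc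
    have hyball : Metric.ball y μ ⊆ Ω := (Metric.ball_subset_ball' (by linarith [hy.2])).trans hc
    rcases hbdry with hin | hout | heq
    · exact (hfar hyball hyc (.inl hin.le)).trans (by linarith)
    · exact (hfar hyball hyc (.inr hout.ge)).trans (by linarith)
    · exact (hB y heq hy.2).trans (by linarith)
  · have hxfar : dist x c ≤ 1 - μ ∨ 1 + μ ≤ dist x c := by
      by_contra! hcon
      exact hann ⟨hcon.1.le, hcon.2.le⟩
    have hM : 0 ≤ M / m := div_nonneg (hm.le.trans ((hmM x hx).1.trans (hmM x hx).2)) hm.le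
    refine (hfar hball hxc hxfar).trans ((le_div_iff₀ (sub_pos.2 hμ₁)).2 ?_)
    nlinarith [mul_nonneg hM hN₀, mul_nonneg hM hB₀]

theorem norm_fderiv_le (h : IsTwoDiskConductivity a Ω c c' ε k k') (hΩ : IsOpen Ω)
    (hΩb : Bornology.IsBounded Ω) {μ : ℝ} (hμ : μ ∈ Ioo (0 : ℝ) 1) (hε : ε ≤ μ / 2)
    (hc : Metric.ball c (1 + 2 * μ) ⊆ Ω) (hc' : Metric.ball c' (1 + 2 * μ) ⊆ Ω) {m M : ℝ}
    (hm : 0 < m) (ha : ContDiffOn ℝ 2 a Ω) (hmM : ∀ x ∈ Ω, a x ∈ Icc m M)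
    (hu : ContDiffOn ℝ 3 u Ω) (huc : ContinuousOn u (closure Ω))
    (hpde : ∀ x ∈ Ω, divGrad a u x = 0) {N : ℝ} (hN : ∀ x ∈ frontier Ω, |u x| ≤ N) {B : ℝ}
    (hB₀ : 0 ≤ B) (hB : ∀ x, dist x c = dist x c' → dist x c ≤ 1 + μ → ‖fderiv ℝ u x‖ ≤ B)
    {x : ℝ²} (hball : Metric.ball x μ ⊆ Ω) :
    ‖fderiv ℝ u x‖ ≤ (1 + M / m) * ((1 + μ) * (B + 8 * N / μ)) / (1 - μ) := by
  have hε' : 1 + ε < 1 + 2 * μ := by linarith [hμ.1]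
  have hN' : ∀ x ∈ Ω, |u x| ≤ N := fun x hx ↦
    h.abs_le_of_frontier hΩ hΩb ((Metric.closedBall_subset_ball hε').trans hc)
      ((Metric.closedBall_subset_ball hε').trans hc') (ha.of_le one_le_two)
      (fun x hx ↦ hm.trans_le (hmM x hx).1) (hu.of_le (by norm_num)) huc hpde hN hx
  rcases le_total (dist x c) (dist x c') with hxc | hxc
  · exact h.norm_fderiv_le_of_dist_le hΩ hμ hε hc hm ha hmM hu hpde hN' hB₀ hB hball hxc
  · exact h.symm.norm_fderiv_le_of_dist_le hΩ hμ hε hc' hm ha hmM hu hpde hN' hB₀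
      (fun y hy hyμ ↦ hB y hy.symm (hy ▸ hyμ)) hball hxc

end IsTwoDiskConductivity

end TwoDisks

section Configuration

theorem dist_ctr_sq (δ : ℝ) (x : ℝ²) : dist x (ctr δ) ^ 2 = x 0 ^ 2 + (x 1 + 2 + 2 * δ) ^ 2 := by
  rw [EuclideanSpace.dist_sq_eq, Fin.sum_univ_two, Real.dist_eq, Real.dist_eq, sq_abs, sq_abs]
  simp only [ctr, WithLp.equiv_symm_apply, Matrix.cons_val_zero, Matrix.cons_val_one]
  ring

theorem norm_sq_eq_sq_add_sq (x : ℝ²) : ‖x‖ ^ 2 = x 0 ^ 2 + x 1 ^ 2 := by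
  rw [EuclideanSpace.real_norm_sq_eq, Fin.sum_univ_two]

theorem norm_eq_dist_ctr_iff {δ : ℝ} (hδ : 0 < δ) {x : ℝ²} :
    ‖x‖ = dist x (ctr δ) ↔ x 1 = -1 - δ := by
  rw [← pow_left_inj₀ (norm_nonneg x) dist_nonneg two_ne_zero, norm_sq_eq_sq_add_sq, dist_ctr_sq]
  refine ⟨fun h ↦ ?_, fun h ↦ by rw [h]; ring⟩
  refine mul_left_cancel₀ (show 2 + 2 * δ ≠ 0 by positivity) ?_
  linear_combination -h / 2

theorem two_add_le_norm_add_dist_ctr {δ : ℝ} (hδ : 0 < δ) (x : ℝ²) :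
    2 + 2 * δ ≤ ‖x‖ + dist x (ctr δ) := by
  have hctr : dist 0 (ctr δ) = 2 + 2 * δ := by
    rw [← pow_left_inj₀ dist_nonneg (by positivity) two_ne_zero, dist_ctr_sq]
    simp
  rw [← hctr, ← dist_zero_left]
  exact dist_triangle 0 x (ctr δ)

theorem ball_subset_of_closure_ball_subset_innerReg {Ω : Set ℝ²} (hΩ : IsOpen Ω) {r σ : ℝ}
    (hr : 0 < r) (hσ : 0 < σ) {c : ℝ²} (h : closure (Metric.ball c r) ⊆ innerReg Ω σ) :
    Metric.ball c (r + σ) ⊆ Ω := by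
  rw [closure_ball c hr.ne'] at h
  rw [add_comm, ← thickening_closedBall hσ hr.le, Metric.thickening_eq_biUnion_ball,
    iUnion₂_subset_iff]
  exact fun z hz ↦ ball_subset_of_le_infDist_frontier hΩ (h hz).1 hσ (h hz).2

theorem isTwoDiskConductivity_of_eq_aFun {a : ℝ² → ℝ} {Ω : Set ℝ²} {δ ε κp κm : ℝ} (hδ : 0 < δ)
    (hε : ε ∈ Ioo 0 (δ / 2))
    (ha : ∀ x ∈ Ω, ε ≤ |‖x‖ - 1| → ε ≤ |dist x (ctr δ) - 1| → a x = aFun δ κp κm x)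
    {gp gm : ℝ → ℝ} (hgp : ∀ x ∈ Ω, |‖x‖ - 1| < ε → a x = gp ‖x‖)
    (hgm : ∀ x ∈ Ω, |dist x (ctr δ) - 1| < ε → a x = gm (dist x (ctr δ))) :
    IsTwoDiskConductivity a Ω 0 (ctr δ) ε κp κm := by
  obtain ⟨hε₀, hεδ⟩ := hε
  have hsum := two_add_le_norm_add_dist_ctr hδ
  refine ⟨fun x hx hin ↦ ?_, fun x hx hin ↦ ?_, fun x hx h₀ h₁ ↦ ?_, ?_, ?_⟩
  · rw [dist_zero_right] at hin
    have hp : x ∈ Bp := mem_ball_zero_iff.2 (by linarith)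
    rw [ha x hx (le_abs.2 (.inr (by linarith))) (le_abs.2 (.inl (by linarith [hsum x]))), aFun,
      if_pos hp]
  · have hp : x ∉ Bp := fun h ↦ by linarith [mem_ball_zero_iff.1 h, hsum x]
    have hm : x ∈ Bm δ := Metric.mem_ball.2 (by linarith)
    rw [ha x hx (le_abs.2 (.inl (by linarith [hsum x]))) (le_abs.2 (.inr (by linarith))), aFun,
      if_neg hp, if_pos hm]
  · rw [dist_zero_right] at h₀
    have hp : x ∉ Bp := fun h ↦ by linarith [mem_ball_zero_iff.1 h]
    have hm : x ∉ Bm δ := fun h ↦ by linarith [Metric.mem_ball.1 h]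
    rw [ha x hx (le_abs.2 (.inl (by linarith))) (le_abs.2 (.inl (by linarith))), aFun, if_neg hp,
      if_neg hm]
  · simp only [dist_zero_right]
    rintro x ⟨hx, hxε⟩ y ⟨hy, hyε⟩ hxy
    rw [dist_zero_right, dist_zero_right] at hxy
    rw [hgp x hx hxε, hgp y hy hyε, hxy]
  · rintro x ⟨hx, hxε⟩ y ⟨hy, hyε⟩ hxy
    rw [hgm x hx hxε, hgm y hy hyε, hxy]

theorem le_of_Sseg_subset {Ω : Set ℝ²} {c δ μ : ℝ} (hδ : 0 < δ) (hc : 0 ≤ c)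
    (h : Sseg c δ ⊆ Wp Ω δ μ ∪ Wm Ω δ μ) : δ ≤ μ := by
  set y : ℝ² := !₂[0, -1 - δ]
  have hy₀ : ‖y‖ = 1 + δ := by
    rw [← pow_left_inj₀ (norm_nonneg y) (by positivity) two_ne_zero, norm_sq_eq_sq_add_sq]
    simp only [y, Matrix.cons_val_zero, Matrix.cons_val_one]
    ring
  have hy₁ : dist y (ctr δ) = 1 + δ := by
    rw [← (norm_eq_dist_ctr_iff hδ).2 (by simp [y]), hy₀]
  rcases h (show y ∈ Sseg c δ from ⟨by simpa [y] using hc, by simp [y]⟩) with hW | hW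
  · have := hW.2.1
    rw [infDist_sphere_of_le_dist one_pos (by rw [dist_zero_right]; linarith),
      dist_zero_right] at this
    linarith
  · have := hW.2.1
    rw [infDist_sphere_of_le_dist one_pos (by linarith)] at this
    linarith

theorem Sseg_subset_Wp {Ω : Set ℝ²} {c δ μ : ℝ} (hδ : 0 < δ) (hμ : 0 < μ)
    (hΩ : Metric.ball 0 (1 + 2 * μ) ⊆ Ω) (hc : c ^ 2 + (1 + δ) ^ 2 ≤ (1 + μ) ^ 2) :
    Sseg c δ ⊆ Wp Ω δ μ := by
  rintro z ⟨hz₀, hz₁⟩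
  have hsq : z 0 ^ 2 ≤ c ^ 2 := sq_le_sq' (abs_le.1 hz₀).1 (abs_le.1 hz₀).2
  have hle : dist z 0 ≤ 1 + μ := by
    rw [dist_zero_right]
    refine (abs_le_of_sq_le_sq' ?_ (by positivity)).2
    rw [norm_sq_eq_sq_add_sq, hz₁]
    linarith
  have hge : 1 ≤ dist z 0 := by
    rw [dist_zero_right]
    refine le_trans ?_ (PiLp.norm_apply_le z 1)
    rw [hz₁, Real.norm_of_nonpos (by linarith)]
    linarith
  refine ⟨hΩ (Metric.mem_ball.2 (by linarith)), ?_, hz₁.ge⟩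
  rw [infDist_sphere_of_le_dist one_pos hge]
  linarith

theorem mem_Sseg_of_norm_eq_dist {Ω : Set ℝ²} {c₁ δ μ : ℝ} (hδ : 0 < δ) (hμ : 0 < μ)
    (hΩ : Metric.ball 0 (1 + 2 * μ) ⊆ Ω) (hmax : ∀ c, Sseg c δ ⊆ Wp Ω δ μ ∪ Wm Ω δ μ → c ≤ c₁)
    {x : ℝ²} (hx : ‖x‖ = dist x (ctr δ)) (hxμ : ‖x‖ ≤ 1 + μ) : x ∈ Sseg c₁ δ := by
  have hx₁ := (norm_eq_dist_ctr_iff hδ).1 hx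
  refine ⟨hmax _ ((Sseg_subset_Wp hδ hμ hΩ ?_).trans subset_union_left), hx₁⟩
  calc |x 0| ^ 2 + (1 + δ) ^ 2 = ‖x‖ ^ 2 := by rw [norm_sq_eq_sq_add_sq, hx₁, sq_abs]; ring
    _ ≤ (1 + μ) ^ 2 := pow_le_pow_left₀ (norm_nonneg x) hxμ 2

theorem isCompact_Sseg (c δ : ℝ) : IsCompact (Sseg c δ) := by
  have h₀ : Continuous fun x : ℝ² ↦ |x 0| := by fun_prop
  have h₁ : Continuous fun x : ℝ² ↦ x 1 := by fun_prop
  refine (isCompact_closedBall 0 √(c ^ 2 + (1 + δ) ^ 2)).of_isClosed_subset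
    ((isClosed_le h₀ continuous_const).inter (isClosed_eq h₁ continuous_const)) ?_
  rintro x ⟨hx₀, hx₁⟩
  refine mem_closedBall_zero_iff.2 (Real.le_sqrt_of_sq_le ?_)
  rw [norm_sq_eq_sq_add_sq, hx₁]
  linarith [sq_le_sq' (abs_le.1 hx₀).1 (abs_le.1 hx₀).2]

end Configuration

theorem stmt7_general {μ m M : ℝ} (hμ : μ ∈ Ioo (0 : ℝ) 1) (hm : 0 < m) (hmM : m ≤ M) :
    ∃ C > 0, ∀ Ω : Set ℝ², IsOpen Ω → Bornology.IsBounded Ω →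
      ∀ δ > 0, ∀ ε ∈ Ioo 0 (δ / 2), closure Bp ∪ closure (Bm δ) ⊆ innerReg Ω (2 * μ) →
      ∀ c₁ : ℝ, 0 < c₁ → Sseg c₁ δ ⊆ Wp Ω δ μ ∪ Wm Ω δ μ →
        (∀ c : ℝ, Sseg c δ ⊆ Wp Ω δ μ ∪ Wm Ω δ μ → c ≤ c₁) →
      ∀ (κp κm : ℝ) (a : ℝ² → ℝ), ContDiffOn ℝ 2 a Ω → (∀ x ∈ Ω, a x ∈ Icc m M) →
        (∀ x ∈ Ω, ε ≤ |‖x‖ - 1| → ε ≤ |dist x (ctr δ) - 1| → a x = aFun δ κp κm x) →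
        (∃ g : ℝ → ℝ, ∀ x ∈ Ω, |‖x‖ - 1| < ε → a x = g ‖x‖) →
        (∃ g : ℝ → ℝ, ∀ x ∈ Ω, |dist x (ctr δ) - 1| < ε → a x = g (dist x (ctr δ))) →
      ∀ u : ℝ² → ℝ, ContDiffOn ℝ 3 u Ω → ContinuousOn u (closure Ω) →
        (∀ x ∈ frontier Ω, |u x| ≤ 1) →
        (∀ x ∈ Ω, a x * (pd 0 (pd 0 u) x + pd 1 (pd 1 u) x)
          + (pd 0 a x * pd 0 u x + pd 1 a x * pd 1 u x) = 0) →
      ∀ x ∈ innerReg Ω μ,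
        ‖fderiv ℝ u x‖ ≤ C * (sSup ((fun y ↦ ‖fderiv ℝ u y‖) '' Sseg c₁ δ) + 1) := by
  obtain ⟨hμ₀, hμ₁⟩ := id hμ
  have hM : 0 < M := hm.trans_le hmM
  have : 0 < 1 - μ := sub_pos.2 hμ₁
  refine ⟨(1 + M / m) * ((1 + μ) * (1 + 8 / μ)) / (1 - μ), by positivity, ?_⟩
  intro Ω hΩ hΩb δ hδ ε hε hdisks c₁ hc₁ hS hmax κp κm a ha hab haF ⟨gp, hgp⟩ ⟨gm, hgm⟩ u hu huc hu₁
    hpde x hx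
  have hcond := isTwoDiskConductivity_of_eq_aFun hδ hε haF hgp hgm
  have hδμ : δ ≤ μ := le_of_Sseg_subset hδ hc₁.le hS
  have hc := ball_subset_of_closure_ball_subset_innerReg hΩ one_pos (by positivity)
    (subset_union_left.trans hdisks)
  have hc' := ball_subset_of_closure_ball_subset_innerReg hΩ one_pos (by positivity)
    (subset_union_right.trans hdisks)
  have hdiv : ∀ y ∈ Ω, divGrad a u y = 0 := fun y hy ↦
    (divGrad_eq_pd ((hu.contDiffAt (hΩ.mem_nhds hy)).of_le (by norm_num))).trans (hpde y hy)
  set B := sSup ((fun y ↦ ‖fderiv ℝ u y‖) '' Sseg c₁ δ)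
  have hB₀ : 0 ≤ B := Real.sSup_nonneg (forall_mem_image.2 fun y _ ↦ norm_nonneg _)
  have hB : ∀ y, dist y 0 = dist y (ctr δ) → dist y 0 ≤ 1 + μ → ‖fderiv ℝ u y‖ ≤ B := by
    simp only [dist_zero_right]
    exact fun y hy hyμ ↦ norm_fderiv_le_sSup_of_isCompact hΩ (isCompact_Sseg c₁ δ)
      (hS.trans (union_subset (sep_subset _ _) (sep_subset _ _))) (hu.of_le (by norm_num))
      (mem_Sseg_of_norm_eq_dist hδ hμ₀ hc hmax hy hyμ)
  have key := hcond.norm_fderiv_le hΩ hΩb hμ (by linarith [hε.2]) hc hc' hm ha hab hu huc hdiv hu₁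
    hB₀ hB (ball_subset_of_le_infDist_frontier hΩ hx.1 hμ₀ hx.2)
  have hsum : B + 8 * 1 / μ ≤ (1 + 8 / μ) * (B + 1) := by
    have : 0 ≤ 8 / μ * B := by positivity
    linarith
  calc ‖fderiv ℝ u x‖ ≤ (1 + M / m) * ((1 + μ) * (B + 8 * 1 / μ)) / (1 - μ) := key
    _ ≤ (1 + M / m) * ((1 + μ) * ((1 + 8 / μ) * (B + 1))) / (1 - μ) := by gcongr
    _ = (1 + M / m) * ((1 + μ) * (1 + 8 / μ)) / (1 - μ) * (B + 1) := by ring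

/-- Lemma 4.1: if `‖φ‖_{L^∞(∂Ω)} ≤ 1`, there is a constant `C` depending only on
`Ω, μ, δ₀, κ⁺, κ⁻` such that `sup_{Ω^μ} |∇u_ε| ≤ C (sup_S |∇u_ε| + 1)`. -/
theorem stmt7 (Ω : Set (EuclideanSpace ℝ (Fin 2)))
    (hΩo : IsOpen Ω) (hΩb : Bornology.IsBounded Ω) (hΩs : SmoothBoundary Ω)
    (μ δ₀ κp κm : ℝ) (hμ : μ ∈ Ioo (0:ℝ) 1) (hδ₀ : 0 < δ₀)
    (hκp : 0 < κp) (hκm : 0 < κm) :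
    ∃ C > 0, ∀ δ ∈ Ioo 0 δ₀, ∀ ε ∈ Ioo 0 (δ / 2),
      closure Bp ∪ closure (Bm δ) ⊆ innerReg Ω (2 * μ) →
      -- `c₁` is the largest constant with `S ⊆ W⁺ ∪ W⁻`
      ∀ c₁ : ℝ, 0 < c₁ → Sseg c₁ δ ⊆ Wp Ω δ μ ∪ Wm Ω δ μ →
        (∀ c : ℝ, Sseg c δ ⊆ Wp Ω δ μ ∪ Wm Ω δ μ → c ≤ c₁) →
      ∀ φ : EuclideanSpace ℝ (Fin 2) → ℝ, ContDiff ℝ (⊤ : ℕ∞) φ →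
        (∀ y ∈ frontier Ω, |φ y| ≤ 1) →
      ∀ aε : EuclideanSpace ℝ (Fin 2) → ℝ,
        ContDiffOn ℝ (⊤ : ℕ∞) aε Ω →
        (∀ x ∈ Ω, min 1 (min κp κm) ≤ aε x ∧ aε x ≤ max 1 (max κp κm)) →
        -- `aε = a` outside the `ε`-neighborhoods of `∂B⁺` and `∂B⁻`
        (∀ x ∈ Ω, ε ≤ |‖x‖ - 1| → ε ≤ |dist x (ctr δ) - 1| → aε x = aFun δ κp κm x) →
        -- near `∂B⁺`, `aε` is radial, nonincreasing if `κ⁺ > 1`, nondecreasing if `κ⁺ < 1`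
        (∃ g : ℝ → ℝ, (1 < κp → Antitone g) ∧ (κp < 1 → Monotone g) ∧
          ∀ x ∈ Ω, |‖x‖ - 1| < ε → aε x = g ‖x‖) →
        -- similarly near `∂B⁻`
        (∃ g : ℝ → ℝ, (1 < κm → Antitone g) ∧ (κm < 1 → Monotone g) ∧
          ∀ x ∈ Ω, |dist x (ctr δ) - 1| < ε → aε x = g (dist x (ctr δ))) →
      ∀ uε : EuclideanSpace ℝ (Fin 2) → ℝ,
        ContDiffOn ℝ (⊤ : ℕ∞) uε Ω →
        ContinuousOn uε (closure Ω) →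
        EqOn uε φ (frontier Ω) →
        (∀ x ∈ Ω, aε x * (pd 0 (pd 0 uε) x + pd 1 (pd 1 uε) x)
          + (pd 0 aε x * pd 0 uε x + pd 1 aε x * pd 1 uε x) = 0) →
        ∀ x ∈ innerReg Ω μ,
          ‖fderiv ℝ uε x‖
            ≤ C * (sSup ((fun y => ‖fderiv ℝ uε y‖) '' Sseg c₁ δ) + 1) := by
  obtain ⟨C, hC, h⟩ := stmt7_general hμ (lt_min one_pos (lt_min hκp hκm))
    ((min_le_left _ _).trans (le_max_left _ (max κp κm)))
  exact ⟨C, hC, fun δ hδ ε hε hdisks c₁ hc₁ hS hmax φ _ hφ a ha hab haF ⟨gp, _, _, hgp⟩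
    ⟨gm, _, _, hgm⟩ u hu huc huφ hpde ↦ h Ω hΩo hΩb δ hδ.1 ε hε hdisks c₁ hc₁ hS hmax κp κm a
      (contDiffOn_infty.1 ha 2) hab haF ⟨gp, hgp⟩ ⟨gm, hgm⟩ u (contDiffOn_infty.1 hu 3) huc
      (fun x hx ↦ huφ hx ▸ hφ x hx) hpde⟩
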